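/- With Apéry's sequences B_n, A_n for ζ(2), one has ∑_{n=0}^∞ (B_n·ζ(2) − A_n) = ∑_{n=0}^∞ ∑_{k=0}^∞ (−1)^n·C(n+k,n) / ( (2n+k+1)² · C(2n+k,n)² ). -/

import Mathlib

open Finset Real

/-- Apéry's denominators for `ζ(2)`: `Bₙ = ∑_{k=0}^n C(n,k)² C(n+k,k)`. -/
noncomputable def aperyB2 (n : ℕ) : ℝ :=
  ∑ k ∈ range (n + 1), (Nat.choose n k : ℝ) ^ 2 * (Nat.choose (n + k) k : ℝ)

/-- Apéry's numerators for `ζ(2)`: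
`Aₙ = ∑_{k=0}^n C(n,k)² C(n+k,k) (2 ∑_{m=1}^n (−1)^{m−1}/m²
  + ∑_{m=1}^k (−1)^{n+m−1}/(m² C(n,m) C(n+m,m)))`. -/
noncomputable def aperyA2 (n : ℕ) : ℝ :=
  ∑ k ∈ range (n + 1), (Nat.choose n k : ℝ) ^ 2 * (Nat.choose (n + k) k : ℝ) *
    (2 * (∑ m ∈ Icc 1 n, (-1 : ℝ) ^ (m - 1) / (m : ℝ) ^ 2)
      + ∑ m ∈ Icc 1 k,
          (-1 : ℝ) ^ (n + m - 1) /
            ((m : ℝ) ^ 2 * (Nat.choose n m : ℝ) * (Nat.choose (n + m) m : ℝ)))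

/-!
The two sides agree term by term in `n`. The inner series runs over the values at `t = 1, 2, …` of
`Rₙ(t) = (-1)ⁿ n! (t - 1)⋯(t - n) / (t (t + 1)⋯(t + n))²`, which vanishes at `t = 1, …, n`. The
coefficient of `1 / (t + k)²` in its partial fraction expansion is Apéry's weight
`C(n,k)² C(n+k,k)`. Creative telescoping in `t`, with the quadratic certificate
`s(t) = -t² + 3(2n + 1)t + 11n² + 9n + 2`, shows that `∑ₜ Rₙ(t)` satisfies Apéry's recurrence
`(n + 1)² uₙ₊₁ - (11n² + 11n + 3) uₙ - n² uₙ₋₁ = 0`. Passing to the coefficients at `t = -k`, the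
certificate `-s(-k)` telescopes the sum over `k` which defines `Bₙ ζ(2) - Aₙ`, up to a correction
for the dependence of Apéry's approximations `c_{n,k}` on `n` and `k`. The initial values are `ζ(2)`
and `3 ζ(2) - 5` on both sides, the second one being the case `n = 0` of the same telescoping.
-/

open Filter Topology

section CastChoose

variable {R : Type*} [CommRing R]

lemma cast_choose_succ_right (n k : ℕ) :
    ((k : R) + 1) * n.choose (k + 1) = (n - k) * n.choose k := by
  rcases le_or_gt k n with h | h
  · have := congrArg (Nat.cast (R := R)) (Nat.choose_succ_right_eq n k)
    push_cast [h] at this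
    linear_combination this
  · simp [Nat.choose_eq_zero_of_lt h, Nat.choose_eq_zero_of_lt (h.trans k.lt_succ_self)]

lemma cast_choose_succ_left (n k : ℕ) :
    ((n : R) + 1 - k) * (n + 1).choose k = (n + 1) * n.choose k := by
  rcases le_or_gt k (n + 1) with h | h
  · have := congrArg (Nat.cast (R := R)) (Nat.choose_mul_succ_eq n k)
    push_cast [h] at this
    linear_combination -this
  · simp [Nat.choose_eq_zero_of_lt h, Nat.choose_eq_zero_of_lt (n.lt_succ_self.trans h)]

lemma cast_choose_succ_succ (n k : ℕ) :
    ((k : R) + 1) * (n + 1).choose (k + 1) = (n + 1) * n.choose k := by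
  have := congrArg (Nat.cast (R := R)) (Nat.add_one_mul_choose_eq n k)
  push_cast at this
  linear_combination -this

lemma cast_add_choose_succ_right (n k : ℕ) :
    ((k : R) + 1) * (n + (k + 1)).choose (k + 1) = (n + k + 1) * (n + k).choose k := by
  have := cast_choose_succ_succ (R := R) (n + k) k
  rwa [Nat.cast_add] at this

lemma cast_add_choose_succ_left (n k : ℕ) :
    ((n : R) + 1) * (n + 1 + k).choose k = (n + k + 1) * (n + k).choose k := by
  have := cast_choose_succ_left (R := R) (n + k) k
  push_cast at this
  rw [Nat.add_right_comm n 1 k]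
  linear_combination this

end CastChoose

lemma tsum_succ_sub_self {E : Type*} [AddCommGroup E] [TopologicalSpace E]
    [ContinuousSub E] [T2Space E] {f : ℕ → E} {l : E} (hf : Summable fun m ↦ f (m + 1) - f m)
    (hl : Tendsto f atTop (𝓝 l)) : ∑' m, (f (m + 1) - f m) = l - f 0 := by
  refine tendsto_nhds_unique hf.hasSum.tendsto_sum_nat ?_
  simpa only [sum_range_sub] using hl.sub_const (f 0)

/-- The difference operator `(n + 1)² uₙ₊₁ - (11n² + 11n + 3) uₙ - n² uₙ₋₁` of Apéry's recurrence
for `ζ(2)`. The index is shifted by one, so that the value at `n` involves `uₙ`, `uₙ₊₁`, `uₙ₊₂`. -/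
def aperyOperator (u : ℕ → ℝ) (n : ℕ) : ℝ :=
  ((n : ℝ) + 2) ^ 2 * u (n + 2)
    - (11 * ((n : ℝ) + 1) ^ 2 + 11 * ((n : ℝ) + 1) + 3) * u (n + 1) - ((n : ℝ) + 1) ^ 2 * u n

lemma eq_of_aperyOperator_eq {u v : ℕ → ℝ} (h : ∀ n, aperyOperator u n = aperyOperator v n)
    (h₀ : u 0 = v 0) (h₁ : u 1 = v 1) : u = v := by
  have key (n : ℕ) : u n = v n ∧ u (n + 1) = v (n + 1) := by
    induction n with
    | zero => exact ⟨h₀, h₁⟩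
    | succ n ih =>
      have hn : ((n : ℝ) + 2) ^ 2 ≠ 0 := by positivity
      have := h n
      simp only [aperyOperator, ih.1, ih.2, sub_left_inj] at this
      exact ⟨ih.2, mul_left_cancel₀ hn this⟩
  exact funext fun n ↦ (key n).1

lemma aperyOperator_sum {ι : Type*} (s : Finset ι) (u : ℕ → ι → ℝ) (n : ℕ) :
    aperyOperator (fun i ↦ ∑ k ∈ s, u i k) n = ∑ k ∈ s, aperyOperator (u · k) n := by
  simp only [aperyOperator, sum_sub_distrib, mul_sum]

lemma hasSum_aperyOperator {ι : Type*} {u : ℕ → ι → ℝ} {a : ℕ → ℝ}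
    (h : ∀ i, HasSum (u i) (a i)) (n : ℕ) :
    HasSum (fun k ↦ aperyOperator (u · k) n) (aperyOperator a n) :=
  (((h (n + 2)).mul_left _).sub ((h (n + 1)).mul_left _)).sub ((h n).mul_left _)

/-- The polynomial certificate `s(t)` which telescopes Apéry's recurrence centred at `n`. -/
def aperyCertificate (n t : ℝ) : ℝ :=
  -t ^ 2 + 3 * (2 * n + 1) * t + 11 * n ^ 2 + 9 * n + 2

lemma abs_aperyCertificate_le {n t : ℝ} (hn : 0 ≤ n) (ht : 1 ≤ t) :
    |aperyCertificate n t| ≤ (11 * n ^ 2 + 15 * n + 6) * t ^ 2 := by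
  have hlin : 3 * (2 * n + 1) * t ≤ 3 * (2 * n + 1) * t ^ 2 := by
    gcongr
    exact le_self_pow₀ ht two_ne_zero
  have hconst : 11 * n ^ 2 + 9 * n + 2 ≤ (11 * n ^ 2 + 9 * n + 2) * t ^ 2 :=
    le_mul_of_one_le_right (by positivity) (one_le_pow₀ ht)
  have hnonneg : 0 ≤ 3 * (2 * n + 1) * t := by positivity
  rw [aperyCertificate, abs_le]
  constructor <;> nlinarith [sq_nonneg t, sq_nonneg n]

/-- `C(n,k) C(n+k,k)`, up to sign the coefficients of the shifted Legendre polynomials. This product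
occurs in Apéry's weights and in the denominators of his approximations. -/
noncomputable def legendreCoeff (n k : ℕ) : ℝ :=
  n.choose k * (n + k).choose k

lemma legendreCoeff_zero_right (n : ℕ) : legendreCoeff n 0 = 1 := by
  simp [legendreCoeff]

lemma legendreCoeff_ne_zero {n k : ℕ} (h : k ≤ n) : legendreCoeff n k ≠ 0 := by
  have hn : 0 < n.choose k := Nat.choose_pos h
  have hnk : 0 < (n + k).choose k := Nat.choose_pos (Nat.le_add_left k n)
  rw [legendreCoeff]
  positivity

lemma legendreCoeff_succ_right (n k : ℕ) :
    ((k : ℝ) + 1) ^ 2 * legendreCoeff n (k + 1) = (n - k) * (n + k + 1) * legendreCoeff n k :=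
  calc ((k : ℝ) + 1) ^ 2 * legendreCoeff n (k + 1)
      = ((k + 1) * n.choose (k + 1)) * ((k + 1) * (n + (k + 1)).choose (k + 1)) := by
        rw [legendreCoeff]; ring
    _ = (n - k) * (n + k + 1) * legendreCoeff n k := by
        rw [cast_choose_succ_right, cast_add_choose_succ_right, legendreCoeff]; ring

lemma legendreCoeff_succ_left (n k : ℕ) :
    ((n : ℝ) + 1 - k) * legendreCoeff (n + 1) k = (n + k + 1) * legendreCoeff n k :=
  calc ((n : ℝ) + 1 - k) * legendreCoeff (n + 1) k
      = ((n + 1 - k) * (n + 1).choose k) * (n + 1 + k).choose k := by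
        rw [legendreCoeff]; ring
    _ = n.choose k * ((n + 1) * (n + 1 + k).choose k) := by
        rw [cast_choose_succ_left]; ring
    _ = (n + k + 1) * legendreCoeff n k := by
        rw [cast_add_choose_succ_left, legendreCoeff]; ring

lemma legendreCoeff_succ_succ (n k : ℕ) :
    ((k : ℝ) + 1) ^ 2 * legendreCoeff (n + 1) (k + 1) =
      (n + k + 1) * (n + k + 2) * legendreCoeff n k := by
  have hright := legendreCoeff_succ_right (n + 1) k
  push_cast at hright
  linear_combination hright + (n + k + 2) * legendreCoeff_succ_left n k

/-- Apéry's weights `C(n,k)² C(n+k,k)`, whose sum over `k` is `Bₙ`. -/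
noncomputable def aperyWeight (n k : ℕ) : ℝ :=
  (n.choose k : ℝ) ^ 2 * ((n + k).choose k : ℝ)

/-- Apéry's double sequence `c_{n,k}` of rational approximations to `ζ(2)`, of which `Aₙ / Bₙ` is a
weighted mean. It is meaningful for `k ≤ n` only: the terms with `m > n` are divisions by zero. -/
noncomputable def aperyApprox (n k : ℕ) : ℝ :=
  2 * (∑ m ∈ Icc 1 n, (-1 : ℝ) ^ (m - 1) / (m : ℝ) ^ 2)
    + ∑ m ∈ Icc 1 k,
        (-1 : ℝ) ^ (n + m - 1) /
          ((m : ℝ) ^ 2 * (n.choose m : ℝ) * ((n + m).choose m : ℝ))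

/-- The weighted error `C(n,k)² C(n+k,k) (z - c_{n,k})`; the case of interest is `z = ζ(2)`. -/
noncomputable def aperyError (z : ℝ) (n k : ℕ) : ℝ :=
  aperyWeight n k * (z - aperyApprox n k)

lemma aperyWeight_eq_zero_of_lt {n k : ℕ} (h : n < k) : aperyWeight n k = 0 := by
  simp [aperyWeight, Nat.choose_eq_zero_of_lt h]

lemma aperyWeight_eq_choose_mul_legendreCoeff (n k : ℕ) :
    aperyWeight n k = n.choose k * legendreCoeff n k := by
  rw [aperyWeight, legendreCoeff]
  ring

lemma aperyWeight_succ_right (n k : ℕ) :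
    ((k : ℝ) + 1) ^ 3 * aperyWeight n (k + 1) = (n - k) ^ 2 * (n + k + 1) * aperyWeight n k := by
  simp only [aperyWeight_eq_choose_mul_legendreCoeff]
  linear_combination (k + 1) ^ 2 * legendreCoeff n (k + 1) * cast_choose_succ_right (R := ℝ) n k
    + (n - k) * n.choose k * legendreCoeff_succ_right n k

lemma aperyWeight_succ_left (n k : ℕ) :
    ((n : ℝ) + 1 - k) ^ 2 * aperyWeight (n + 1) k = (n + 1) * (n + k + 1) * aperyWeight n k := by
  simp only [aperyWeight_eq_choose_mul_legendreCoeff]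
  linear_combination
    (n + 1 - k) * legendreCoeff (n + 1) k * cast_choose_succ_left (R := ℝ) n k
      + (n + 1) * n.choose k * legendreCoeff_succ_left n k

lemma aperyApprox_succ_right_sub (n k : ℕ) :
    aperyApprox n (k + 1) - aperyApprox n k =
      (-1) ^ (n + k) / ((k + 1) ^ 2 * legendreCoeff n (k + 1)) := by
  rw [aperyApprox, aperyApprox, sum_Icc_succ_top (by omega), add_sub_add_left_eq_sub,
    add_sub_cancel_left, ← add_assoc n k 1, Nat.add_sub_cancel, legendreCoeff, mul_assoc]
  push_cast
  rfl

lemma aperyApprox_succ_left_sub {n k : ℕ} (h : k ≤ n) :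
    aperyApprox (n + 1) k - aperyApprox n k =
      2 * (-1) ^ (n + k) / ((n + 1) * (n + k + 1) * legendreCoeff n k) := by
  induction k with
  | zero =>
    simp only [aperyApprox, sum_Icc_succ_top (Nat.le_add_left 1 n), Nat.add_sub_cancel,
      Icc_eq_empty_of_lt zero_lt_one, sum_empty, legendreCoeff_zero_right]
    push_cast
    ring
  | succ k ih =>
    have hk : (n : ℝ) - k ≠ 0 := sub_ne_zero.2 (by exact_mod_cast (Nat.lt_of_succ_le h).ne')
    have hk₂ : (n : ℝ) + k + 2 ≠ 0 := by positivity
    have hcoeff : legendreCoeff n k ≠ 0 := legendreCoeff_ne_zero (Nat.le_of_succ_le h)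
    have hright : legendreCoeff n (k + 1) =
        (n - k) * (n + k + 1) * legendreCoeff n k / (k + 1) ^ 2 := by
      rw [← legendreCoeff_succ_right]
      field_simp
    calc aperyApprox (n + 1) (k + 1) - aperyApprox n (k + 1)
        = (aperyApprox (n + 1) (k + 1) - aperyApprox (n + 1) k)
            + (aperyApprox (n + 1) k - aperyApprox n k)
            - (aperyApprox n (k + 1) - aperyApprox n k) := by ring
      _ = (-1) ^ (n + 1 + k) / ((n + k + 1) * (n + k + 2) * legendreCoeff n k)
            + 2 * (-1) ^ (n + k) / ((n + 1) * (n + k + 1) * legendreCoeff n k)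
            - (-1) ^ (n + k) / ((n - k) * (n + k + 1) * legendreCoeff n k) := by
          rw [aperyApprox_succ_right_sub, aperyApprox_succ_right_sub, ih (Nat.le_of_succ_le h),
            legendreCoeff_succ_succ, legendreCoeff_succ_right]
      _ = 2 * (-1) ^ (n + (k + 1)) / ((n + 1) * (n + k + 2) * legendreCoeff n (k + 1)) := by
          rw [hright, Nat.add_right_comm n 1 k, ← add_assoc n k 1, pow_succ]
          field_simp
          ring
      _ = _ := by
          push_cast
          ring

lemma aperyError_succ_right (z : ℝ) (n k : ℕ) :
    ((k : ℝ) + 1) ^ 3 * aperyError z n (k + 1) =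
      (n - k) ^ 2 * (n + k + 1) * aperyError z n k - (-1) ^ (n + k) * (n - k) * n.choose k := by
  have happrox : aperyWeight n (k + 1) * (aperyApprox n (k + 1) - aperyApprox n k) * (k + 1) ^ 2 =
      (-1) ^ (n + k) * n.choose (k + 1) := by
    rcases lt_or_ge n (k + 1) with h | h
    · simp [aperyWeight_eq_zero_of_lt h, Nat.choose_eq_zero_of_lt h]
    · have hcoeff := legendreCoeff_ne_zero h
      rw [aperyApprox_succ_right_sub, aperyWeight_eq_choose_mul_legendreCoeff]
      field_simp
  simp only [aperyError]
  linear_combination (z - aperyApprox n k) * aperyWeight_succ_right n k - (k + 1) * happrox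
    - (-1) ^ (n + k) * cast_choose_succ_right (R := ℝ) n k

lemma aperyError_succ_left (z : ℝ) (n k : ℕ) :
    ((n : ℝ) + 1 - k) ^ 2 * aperyError z (n + 1) k =
      (n + 1) * (n + k + 1) * aperyError z n k - 2 * (-1) ^ (n + k) * n.choose k := by
  have happrox : aperyWeight n k * (aperyApprox (n + 1) k - aperyApprox n k) *
      ((n + 1) * (n + k + 1)) = 2 * (-1) ^ (n + k) * n.choose k := by
    rcases lt_or_ge n k with h | h
    · simp [aperyWeight_eq_zero_of_lt h, Nat.choose_eq_zero_of_lt h]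
    · have hcoeff := legendreCoeff_ne_zero h
      rw [aperyApprox_succ_left_sub h, aperyWeight_eq_choose_mul_legendreCoeff]
      field_simp
  simp only [aperyError]
  linear_combination (z - aperyApprox (n + 1) k) * aperyWeight_succ_left n k - happrox

lemma aperyError_succ_succ (z : ℝ) (n k : ℕ) :
    ((k : ℝ) + 1) ^ 3 * aperyError z (n + 1) (k + 1) =
      (n + 1) * (n + k + 1) * (n + k + 2) * aperyError z n k
        - (-1) ^ (n + k) * (n + 2 * k + 3) * n.choose k := by
  have hright := aperyError_succ_right z (n + 1) k
  have hleft := aperyError_succ_left z n k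
  have hchoose := cast_choose_succ_left (R := ℝ) n k
  rw [Nat.add_right_comm n 1 k, pow_succ] at hright
  push_cast at hright
  linear_combination hright + (n + k + 2) * hleft + (-1) ^ (n + k) * hchoose

lemma aperyError_succ_right_of_succ_left (z : ℝ) (n k : ℕ) :
    ((n : ℝ) + 1) ^ 2 * (k + 1) ^ 3 * aperyError z n (k + 1) =
      (n + 1) * (n - k) ^ 2 * (n + 1 - k) ^ 2 * aperyError z (n + 1) k
        + (-1) ^ (n + k) * (n - k) * (n + 1 - k) * (n - 2 * k - 1) * (n + 1).choose k := by
  have hpos : (n : ℝ) + k + 2 ≠ 0 := by positivity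
  have hright := aperyError_succ_right z (n + 1) k
  have hleft := aperyError_succ_left z n (k + 1)
  have hchoose_right := cast_choose_succ_right (R := ℝ) n k
  have hchoose_left := cast_choose_succ_left (R := ℝ) n k
  rw [Nat.add_right_comm n 1 k, pow_succ] at hright
  rw [← add_assoc n k 1, pow_succ] at hleft
  push_cast at hright hleft
  refine mul_left_cancel₀ hpos ?_
  linear_combination (n + 1) * (n - k) ^ 2 * hright - (n + 1) * (k + 1) ^ 3 * hleft
    - 2 * (-1) ^ (n + k) * (n + 1) * (k + 1) ^ 2 * hchoose_right
    + 2 * (-1) ^ (n + k) * (k + 1) ^ 2 * (n - k) * hchoose_left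

/-- The antidifference in `k` of Apéry's recurrence, centred at `n + 1`, for the weighted errors.
The second summand compensates for the increments of `c_{n,k}`. -/
noncomputable def aperyErrorPrimitive (z : ℝ) (n k : ℕ) : ℝ :=
  -aperyCertificate (n + 1) (-k) * aperyError z (n + 1) k
    + (-1) ^ (n + 1 + k) * (3 * k / (n + 1)) * (n + 1).choose k

lemma aperyOperator_aperyError_succ (z : ℝ) (n k : ℕ) :
    aperyOperator (fun i ↦ aperyError z i (k + 1)) n =
      aperyErrorPrimitive z n (k + 1) - aperyErrorPrimitive z n k := by
  have hnext : aperyError z (n + 2) (k + 1) =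
      ((n + 2) * (n + k + 2) * (n + k + 3) * aperyError z (n + 1) k
        + (-1) ^ (n + k) * (n + 2 * k + 4) * (n + 1).choose k) / (k + 1) ^ 3 := by
    rw [eq_div_iff (by positivity)]
    have := aperyError_succ_succ z (n + 1) k
    rw [Nat.add_right_comm n 1 k, pow_succ] at this
    push_cast at this
    linear_combination this
  have hcurr : aperyError z (n + 1) (k + 1) =
      ((n + 1 - k) ^ 2 * (n + k + 2) * aperyError z (n + 1) k
        + (-1) ^ (n + k) * (n + 1 - k) * (n + 1).choose k) / (k + 1) ^ 3 := by
    rw [eq_div_iff (by positivity)]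
    have := aperyError_succ_right z (n + 1) k
    rw [Nat.add_right_comm n 1 k, pow_succ] at this
    push_cast at this
    linear_combination this
  have hprev := eq_div_of_mul_eq (by positivity)
    ((mul_comm _ _).trans (aperyError_succ_right_of_succ_left z n k))
  have hchoose : ((n + 1).choose (k + 1) : ℝ) = (n + 1 - k) * (n + 1).choose k / (k + 1) := by
    rw [eq_div_iff (by positivity)]
    have := cast_choose_succ_right (R := ℝ) (n + 1) k
    push_cast at this
    linear_combination this
  simp only [aperyOperator, aperyErrorPrimitive, aperyCertificate]
  rw [hnext, hcurr, hprev, hchoose, ← add_assoc (n + 1) k 1, Nat.add_right_comm n 1 k, pow_succ,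
    pow_succ]
  push_cast
  field_simp
  ring

lemma aperyOperator_aperyError_zero (z : ℝ) (n : ℕ) :
    aperyOperator (fun i ↦ aperyError z i 0) n = aperyErrorPrimitive z n 0 := by
  have h₁ := aperyError_succ_left z n 0
  have h₂ := aperyError_succ_left z (n + 1) 0
  simp only [aperyOperator, aperyErrorPrimitive, aperyCertificate]
  push_cast [Nat.choose_zero_right] at h₁ h₂ ⊢
  linear_combination h₁ + h₂

lemma aperyB2_mul_sub_aperyA2 (z : ℝ) {n N : ℕ} (h : n < N) :
    aperyB2 n * z - aperyA2 n = ∑ k ∈ range N, aperyError z n k := by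
  have hsub : range (n + 1) ⊆ range N := range_subset_range.2 h
  have hzero : ∀ k ∈ range N, k ∉ range (n + 1) → aperyError z n k = 0 := fun k _ hk ↦ by
    rw [aperyError, aperyWeight_eq_zero_of_lt (by simpa using hk), zero_mul]
  rw [← sum_subset hsub hzero]
  simp only [aperyError, mul_sub, sum_sub_distrib, ← sum_mul]
  rfl

lemma aperyOperator_aperyB2_mul_sub_aperyA2 (z : ℝ) (n : ℕ) :
    aperyOperator (fun i ↦ aperyB2 i * z - aperyA2 i) n = 0 := by
  have htop : aperyErrorPrimitive z n (n + 2) = 0 := by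
    simp [aperyErrorPrimitive, aperyError, aperyWeight_eq_zero_of_lt]
  calc aperyOperator (fun i ↦ aperyB2 i * z - aperyA2 i) n
      = aperyOperator (fun i ↦ ∑ k ∈ range (n + 3), aperyError z i k) n := by
        simp only [aperyOperator]
        rw [aperyB2_mul_sub_aperyA2 z (by omega : n + 2 < n + 3),
          aperyB2_mul_sub_aperyA2 z (by omega : n + 1 < n + 3),
          aperyB2_mul_sub_aperyA2 z (by omega : n < n + 3)]
    _ = ∑ k ∈ range (n + 3), aperyOperator (fun i ↦ aperyError z i k) n :=
        aperyOperator_sum _ (aperyError z) n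
    _ = aperyErrorPrimitive z n (n + 2) := by
        simp only [sum_range_succ' _ (n + 2), aperyOperator_aperyError_succ,
          aperyOperator_aperyError_zero, sum_range_sub, sub_add_cancel]
    _ = 0 := htop

/-- The value `Rₙ(m + 1)` of the rational function
`Rₙ(t) = (-1)ⁿ n! (t - 1)⋯(t - n) / (t (t + 1)⋯(t + n))²`, in terms of binomial coefficients. -/
noncomputable def aperyTerm (n m : ℕ) : ℝ :=
  (-1) ^ n * m.choose n / ((n + m + 1) ^ 2 * ((m + n).choose n : ℝ) ^ 2)

lemma aperyTerm_eq_zero_of_lt {n m : ℕ} (h : m < n) : aperyTerm n m = 0 := by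
  simp [aperyTerm, Nat.choose_eq_zero_of_lt h]

lemma aperyTerm_zero_left (m : ℕ) : aperyTerm 0 m = 1 / ((m : ℝ) + 1) ^ 2 := by
  simp [aperyTerm]

lemma aperyTerm_succ_left (n m : ℕ) :
    aperyTerm (n + 1) m = -((n + 1) * (m - n) / (n + m + 2) ^ 2) * aperyTerm n m := by
  have hnum : (m.choose (n + 1) : ℝ) = (m - n) * m.choose n / (n + 1) := by
    rw [← cast_choose_succ_right]
    field_simp
  have hden : ((m + (n + 1)).choose (n + 1) : ℝ) =
      (m + n + 1) * (m + n).choose n / (n + 1) := by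
    rw [← cast_add_choose_succ_right]
    field_simp
  have hpos : (n : ℝ) + m + 2 ≠ 0 := by positivity
  have hchoose : ((m + n).choose n : ℝ) ≠ 0 := by
    exact_mod_cast (Nat.choose_pos (Nat.le_add_left n m)).ne'
  rw [aperyTerm, aperyTerm, hnum, hden]
  push_cast
  rw [show (n : ℝ) + 1 + m + 1 = n + m + 2 by ring]
  field_simp
  ring

lemma aperyTerm_succ_succ (n m : ℕ) :
    aperyTerm (n + 1) (m + 1) =
      -((n + 1) * (m + 1) ^ 3 / ((n + m + 2) * (n + m + 3)) ^ 2) * aperyTerm n m := by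
  have hnum : ((m + 1).choose (n + 1) : ℝ) = (m + 1) * m.choose n / (n + 1) := by
    rw [← cast_choose_succ_succ]
    field_simp
  have hden : ((m + 1 + (n + 1)).choose (n + 1) : ℝ) =
      (m + n + 2) * (m + n + 1) * (m + n).choose n / ((m + 1) * (n + 1)) := by
    rw [eq_div_iff (by positivity)]
    have hright := cast_add_choose_succ_right (R := ℝ) (m + 1) n
    have hleft := cast_add_choose_succ_left (R := ℝ) m n
    push_cast at hright
    linear_combination (m + 1) * hright + (m + n + 2) * hleft
  have hpos₂ : (n : ℝ) + m + 2 ≠ 0 := by positivity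
  have hpos₃ : (n : ℝ) + m + 3 ≠ 0 := by positivity
  have hchoose : ((m + n).choose n : ℝ) ≠ 0 := by
    exact_mod_cast (Nat.choose_pos (Nat.le_add_left n m)).ne'
  rw [aperyTerm, aperyTerm, hnum, hden]
  push_cast
  rw [show (n : ℝ) + 1 + (m + 1) + 1 = n + m + 3 by ring, add_comm (m : ℝ) n]
  field_simp
  ring

lemma abs_aperyTerm_le (n m : ℕ) : |aperyTerm n m| ≤ 1 / ((m : ℝ) + 1) ^ 2 := by
  have hle : (m.choose n : ℝ) ≤ (m + n).choose n := by
    exact_mod_cast Nat.choose_le_choose n (Nat.le_add_right m n)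
  have hone : (1 : ℝ) ≤ (m + n).choose n := by
    exact_mod_cast Nat.choose_pos (Nat.le_add_left n m)
  calc |aperyTerm n m|
      = m.choose n / ((n + m + 1) ^ 2 * ((m + n).choose n : ℝ) ^ 2) := by
        rw [aperyTerm, abs_div, abs_mul, abs_pow, abs_neg, abs_one, one_pow, one_mul,
          abs_of_nonneg (by positivity), abs_of_nonneg (by positivity)]
    _ ≤ ((m + n).choose n : ℝ) ^ 2 / ((m + 1) ^ 2 * ((m + n).choose n : ℝ) ^ 2) := by
        gcongr
        · exact hle.trans (le_self_pow₀ hone two_ne_zero)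
        · linarith [(Nat.cast_nonneg n : (0 : ℝ) ≤ n)]
    _ = 1 / ((m : ℝ) + 1) ^ 2 := by
        field_simp

lemma abs_aperyTerm_succ_left_le (n m : ℕ) :
    |aperyTerm (n + 1) m| ≤ ((n : ℝ) + 1) / ((m : ℝ) + 1) ^ 3 := by
  have hn : (0 : ℝ) ≤ n := n.cast_nonneg
  have hm : (0 : ℝ) ≤ m := m.cast_nonneg
  have hfactor : |-(((n : ℝ) + 1) * (m - n) / (n + m + 2) ^ 2)| ≤ ((n : ℝ) + 1) / (m + 1) := by
    have hsub : |(m : ℝ) - n| ≤ n + m + 2 := abs_le.2 ⟨by linarith [hm], by linarith [hn]⟩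
    calc |-(((n : ℝ) + 1) * (m - n) / (n + m + 2) ^ 2)|
        = (n + 1) * |(m : ℝ) - n| / (n + m + 2) ^ 2 := by
          rw [abs_neg, abs_div, abs_mul, abs_of_nonneg (by positivity : (0 : ℝ) ≤ n + 1),
            abs_of_nonneg (by positivity : (0 : ℝ) ≤ (n + m + 2) ^ 2)]
      _ ≤ (n + 1) * ((n : ℝ) + m + 2) / (n + m + 2) ^ 2 := by gcongr
      _ = ((n : ℝ) + 1) / (n + m + 2) := by field_simp
      _ ≤ ((n : ℝ) + 1) / (m + 1) := by
          gcongr _ / ?_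
          linarith
  calc |aperyTerm (n + 1) m|
      ≤ ((n : ℝ) + 1) / (m + 1) * (1 / ((m : ℝ) + 1) ^ 2) := by
        rw [aperyTerm_succ_left, abs_mul]
        gcongr
        exact abs_aperyTerm_le n m
    _ = ((n : ℝ) + 1) / ((m : ℝ) + 1) ^ 3 := by
        field_simp

lemma summable_aperyTerm (n : ℕ) : Summable (aperyTerm n) := by
  have hsq : Summable fun m : ℕ ↦ 1 / ((m : ℝ) + 1) ^ 2 := by
    simpa using (summable_nat_add_iff 1).2 (Real.summable_one_div_nat_pow.2 one_lt_two)
  exact .of_norm_bounded hsq (abs_aperyTerm_le n)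

/-- The antidifference in `m` of Apéry's recurrence, centred at `n`, for the terms `Rₙ(m + 1)`. -/
noncomputable def aperyTermPrimitive (n m : ℕ) : ℝ :=
  aperyCertificate n (m + 1) * aperyTerm n m

lemma aperyOperator_aperyTerm (n m : ℕ) :
    aperyOperator (fun i ↦ aperyTerm i m) n =
      aperyTermPrimitive (n + 1) (m + 1) - aperyTermPrimitive (n + 1) m := by
  simp only [aperyOperator, aperyTermPrimitive, aperyCertificate]
  rw [aperyTerm_succ_left (n + 1), aperyTerm_succ_left n, aperyTerm_succ_succ]
  have hpos₂ : (n : ℝ) + m + 2 ≠ 0 := by positivity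
  have hpos₃ : (n : ℝ) + m + 3 ≠ 0 := by positivity
  push_cast
  rw [show (n : ℝ) + 1 + m + 2 = n + m + 3 by ring]
  field_simp
  ring

lemma aperyTerm_one_sub_three_mul_aperyTerm_zero (m : ℕ) :
    aperyTerm 1 m - 3 * aperyTerm 0 m = aperyTermPrimitive 0 (m + 1) - aperyTermPrimitive 0 m := by
  have hpos : (m : ℝ) + 2 ≠ 0 := by positivity
  have hsucc := aperyTerm_succ_left 0 m
  simp only [zero_add, aperyTerm_zero_left] at hsucc
  simp only [aperyTermPrimitive, aperyCertificate, hsucc, aperyTerm_zero_left]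
  push_cast
  rw [show (m : ℝ) + 1 + 1 = m + 2 by ring, zero_add]
  field_simp
  ring

lemma tendsto_aperyTermPrimitive_zero :
    Tendsto (aperyTermPrimitive 0) atTop (𝓝 (-1)) := by
  have hinv := tendsto_one_div_add_atTop_nhds_zero_nat (𝕜 := ℝ)
  have hlim : Tendsto (fun m : ℕ ↦ -1 + 3 * (1 / ((m : ℝ) + 1)) + 2 * (1 / ((m : ℝ) + 1)) ^ 2) atTop
      (𝓝 (-1 + 3 * 0 + 2 * 0 ^ 2)) :=
    ((hinv.const_mul 3).const_add (-1)).add ((hinv.pow 2).const_mul 2)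
  convert! hlim using 2 with m
  · rw [aperyTermPrimitive, aperyCertificate, aperyTerm_zero_left]
    push_cast
    field_simp
    ring
  · norm_num

lemma tendsto_aperyTermPrimitive_succ (n : ℕ) :
    Tendsto (aperyTermPrimitive (n + 1)) atTop (𝓝 0) := by
  let C : ℝ := (11 * (n + 1 : ℕ) ^ 2 + 15 * (n + 1 : ℕ) + 6) * (n + 1)
  have hbound (m : ℕ) : ‖aperyTermPrimitive (n + 1) m‖ ≤ C * (1 / ((m : ℝ) + 1)) :=
    calc ‖aperyTermPrimitive (n + 1) m‖
        = |aperyCertificate (n + 1 : ℕ) (m + 1)| * |aperyTerm (n + 1) m| := abs_mul _ _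
      _ ≤ (11 * (n + 1 : ℕ) ^ 2 + 15 * (n + 1 : ℕ) + 6) * ((m : ℝ) + 1) ^ 2 *
            ((n + 1) / (m + 1) ^ 3) := by
          gcongr
          · exact abs_aperyCertificate_le (Nat.cast_nonneg _) (by simp)
          · exact abs_aperyTerm_succ_left_le n m
      _ = C * (1 / ((m : ℝ) + 1)) := by
          simp only [C]
          field_simp
  refine squeeze_zero_norm hbound ?_
  simpa using (tendsto_one_div_add_atTop_nhds_zero_nat (𝕜 := ℝ)).const_mul C

lemma aperyOperator_tsum_aperyTerm (n : ℕ) :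
    aperyOperator (fun i ↦ ∑' m, aperyTerm i m) n = 0 := by
  have hsum := hasSum_aperyOperator (fun i ↦ (summable_aperyTerm i).hasSum) n
  simp only [aperyOperator_aperyTerm] at hsum
  rw [← hsum.tsum_eq, tsum_succ_sub_self hsum.summable (tendsto_aperyTermPrimitive_succ n)]
  simp [aperyTermPrimitive, aperyTerm_eq_zero_of_lt]

lemma tsum_aperyTerm_zero : ∑' m, aperyTerm 0 m = π ^ 2 / 6 := by
  simpa [aperyTerm_zero_left] using ((hasSum_nat_add_iff' 1).2 hasSum_zeta_two).tsum_eq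

lemma tsum_aperyTerm_one : ∑' m, aperyTerm 1 m = 3 * (π ^ 2 / 6) - 5 := by
  have hsum := (summable_aperyTerm 1).hasSum.sub ((summable_aperyTerm 0).hasSum.mul_left 3)
  simp only [aperyTerm_one_sub_three_mul_aperyTerm_zero] at hsum
  have htel := tsum_succ_sub_self hsum.summable tendsto_aperyTermPrimitive_zero
  have hzero : aperyTermPrimitive 0 0 = 4 := by
    norm_num [aperyTermPrimitive, aperyCertificate, aperyTerm]
  rw [hsum.tsum_eq, tsum_aperyTerm_zero, hzero] at htel
  linear_combination htel

lemma aperyB2_mul_zeta_two_sub_aperyA2 (n : ℕ) :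
    aperyB2 n * (π ^ 2 / 6) - aperyA2 n = ∑' m, aperyTerm n m := by
  suffices (fun i ↦ aperyB2 i * (π ^ 2 / 6) - aperyA2 i) = fun i ↦ ∑' m, aperyTerm i m from
    congrFun this n
  refine eq_of_aperyOperator_eq (fun i ↦ ?_) ?_ ?_
  · rw [aperyOperator_aperyB2_mul_sub_aperyA2, aperyOperator_tsum_aperyTerm]
  · simp [tsum_aperyTerm_zero, aperyB2, aperyA2]
  · rw [tsum_aperyTerm_one]
    norm_num [aperyB2, aperyA2, sum_range_succ]

/-- **The signed error sum of Apéry's continued fraction for `ζ(2)` as a double series.**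
`∑ₙ (Bₙ ζ(2) − Aₙ) = ∑ₙ ∑ₖ (−1)ⁿ C(n+k,n)/((2n+k+1)² C(2n+k,n)²)`, where `ζ(2) = π²/6`. -/
theorem error_sum_apery_zeta_two :
    ∑' n : ℕ, (aperyB2 n * (π ^ 2 / 6) - aperyA2 n)
      = ∑' n : ℕ, ∑' k : ℕ,
          (-1 : ℝ) ^ n * (Nat.choose (n + k) n : ℝ) /
            ((2 * (n : ℝ) + k + 1) ^ 2 * (Nat.choose (2 * n + k) n : ℝ) ^ 2) := by
  refine tsum_congr fun n ↦ ?_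
  have hvanish : ∑ m ∈ range n, aperyTerm n m = 0 :=
    sum_eq_zero fun m hm ↦ aperyTerm_eq_zero_of_lt (mem_range.1 hm)
  rw [aperyB2_mul_zeta_two_sub_aperyA2, ← (summable_aperyTerm n).sum_add_tsum_nat_add n, hvanish,
    zero_add]
  refine tsum_congr fun k ↦ ?_
  rw [aperyTerm, add_comm k n, Nat.add_right_comm n k n, ← two_mul]
  push_cast
  ring
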